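/- Let X be a Borel subset of the Cantor space 2^ℕ. Then the following are equivalent: (1) the countable power X^ℕ of the subspace X, with the product topology, is countable dense homogeneous; (2) X is a Gδ subset of 2^ℕ; (3) X^ℕ has at most one point, or X^ℕ is homeomorphic to the Cantor space 2^ℕ, or X^ℕ is homeomorphic to the Baire space ℕ^ℕ. -/

import Mathlib

open MeasureTheory

/-- A topological space is countable dense homogeneous (CDH) if for any two countable
dense subsets `D`, `D'` there is a self-homeomorphism taking `D` onto `D'`. -/
def IsCDH (X : Type*) [TopologicalSpace X] : Prop :=
  ∀ D D' : Set X, D.Countable → Dense D → D'.Countable → Dense D' →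
    ∃ h : X ≃ₜ X, h '' D = D'

/-!
A subspace `X` of a Polish space is `Gδ` exactly when it is Polish (Alexandrov), and `X ^ ℕ` is
Polish exactly when its closed diagonal `X` is.

Suppose `X ^ ℕ` is CDH and `X` is Borel with at least two points. A meagre space has a countable
dense `Gδ` subset, but adding to it a countable dense subset of a Cantor set `{a, b} ^ ℕ` destroys
being `Gδ`; hence `X ^ ℕ` is not meagre. Pushing meagre open sets of `X` into the coordinates shows
that `X` is a Baire space, so, having the Baire property, it contains a dense Polish subspace, and
so does `X ^ ℕ`. By CDH every countable subset of `X ^ ℕ` lies in a Polish subspace. Restricted to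
the diagonal, this says that every countable subset of `X` lies in a `Gδ` set contained in `X`,
which for a co-analytic `X` forces `X` to be `Gδ`.

Conversely, let `Z = X ^ ℕ` be Polish and zero-dimensional with at least two points. It is perfect,
and either compact or nowhere locally compact. Given an enumerated dense set, split `Z` repeatedly
into two, respectively infinitely many, clopen pieces, always giving index `0` to the piece that
contains the first enumerated point of the set being split. The resulting homeomorphism with
`2 ^ ℕ` or `ℕ ^ ℕ` takes the dense set to the sequences that are eventually `0`, a set that does
not depend on the dense set.
-/

section

open Set Filter Topology TopologicalSpace Uniformity PiNat Function ENNReal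

theorem polishSpace_of_isGδ {M : Type*} [TopologicalSpace M] [PolishSpace M] {s : Set M}
    (hs : IsGδ s) : PolishSpace s := by
  obtain ⟨U, hU, rfl⟩ := isGδ_iff_eq_iInter_nat.1 hs
  have (n : ℕ) : PolishSpace (U n) := (hU n).polishSpace
  let f (x : (⋂ n, U n : Set M)) (n : ℕ) : U n := ⟨x, mem_iInter.1 x.2 n⟩
  have hf : Continuous f := continuous_pi fun n => continuous_subtype_val.subtype_mk _
  have hval (n : ℕ) : Continuous fun y : ∀ n, U n => (y n : M) :=
    continuous_subtype_val.comp (continuous_apply n)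
  have range_eq : range f = ⋂ n, {y | (y n : M) = y 0} := by
    refine Subset.antisymm (range_subset_iff.2 fun x => mem_iInter.2 fun n => rfl) fun y hy => ?_
    have hy' (n : ℕ) : (y n : M) = y 0 := mem_iInter.1 hy n
    exact ⟨⟨y 0, mem_iInter.2 fun n => hy' n ▸ (y n).2⟩, funext fun n => Subtype.ext (hy' n).symm⟩
  have hclosed : IsClosedEmbedding f :=
    ⟨.of_comp hf (hval 0) .subtypeVal,
      range_eq ▸ isClosed_iInter fun n => isClosed_eq (hval n) (hval 0)⟩
  exact hclosed.polishSpace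

theorem isGδ_setOf_comap_nhds_prod_le_uniformity {P M : Type*} [UniformSpace P]
    [IsCountablyGenerated (𝓤 P)] [TopologicalSpace M] (f : P → M) :
    IsGδ {x | comap f (𝓝 x) ×ˢ comap f (𝓝 x) ≤ 𝓤 P} := by
  obtain ⟨V, hV⟩ := (𝓤 P).exists_antitone_basis
  have hopen (n : ℕ) : IsOpen {x | V n ∈ comap f (𝓝 x) ×ˢ comap f (𝓝 x)} := by
    refine isOpen_iff_mem_nhds.2 fun x hx => ?_
    obtain ⟨S, ⟨T, hT, hTS⟩, hSV⟩ := mem_prod_same_iff.1 hx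
    filter_upwards [eventually_mem_nhds_iff.2 hT] with y hy
    exact mem_prod_same_iff.2 ⟨S, ⟨T, hy, hTS⟩, hSV⟩
  convert IsGδ.iInter_of_isOpen hopen using 1
  ext x
  simp only [mem_ofPred_eq, mem_iInter]
  exact hV.1.ge_iff.trans (by simp only [true_imp_iff])

/-- The uniformity `𝓤 P` turns a point of `closure (range f)` into a Cauchy filter on `P` exactly
when it lies in the set of `isGδ_setOf_comap_nhds_prod_le_uniformity`. -/
theorem isGδ_range_of_isEmbedding {P M : Type*} [TopologicalSpace P]
    [IsCompletelyMetrizableSpace P] [TopologicalSpace M] [MetrizableSpace M] {f : P → M}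
    (hf : IsEmbedding f) : IsGδ (range f) := by
  let _ := upgradeIsCompletelyMetrizable P
  suffices range f = closure (range f) ∩ {x | comap f (𝓝 x) ×ˢ comap f (𝓝 x) ≤ 𝓤 P} by
    rw [this]
    let _ := metrizableSpaceMetric M
    exact isClosed_closure.isGδ.inter (isGδ_setOf_comap_nhds_prod_le_uniformity f)
  refine Subset.antisymm (range_subset_iff.2 fun p => ⟨subset_closure ⟨p, rfl⟩, ?_⟩) ?_
  · have := (cauchy_nhds (a := p)).2
    rwa [hf.nhds_eq_comap] at this
  · rintro x ⟨hx, hcauchy⟩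
    have hne : NeBot (comap f (𝓝 x)) := comap_neBot_iff.2 fun t ht =>
      (mem_closure_iff_nhds.1 hx t ht).elim fun _ ⟨hy, p, hp⟩ => ⟨p, hp ▸ hy⟩
    obtain ⟨p, hp⟩ := CompleteSpace.complete ⟨hne, hcauchy⟩
    exact ⟨p, tendsto_nhds_unique ((hf.continuous.tendsto p).mono_left hp) tendsto_comap⟩

theorem isGδ_of_polishSpace {M : Type*} [TopologicalSpace M] [MetrizableSpace M] {s : Set M}
    [PolishSpace s] : IsGδ s := by
  simpa only [Subtype.range_coe] using isGδ_range_of_isEmbedding (.subtypeVal (p := (· ∈ s)))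

/-- `X` and `S` are `Gδ`-separated if some `Gδ` set contains `X` and misses `S`. The notion is
not symmetric. -/
def GδSeparated {M : Type*} [TopologicalSpace M] (X S : Set M) : Prop :=
  ∃ H, IsGδ H ∧ X ⊆ H ∧ Disjoint H S

section Separation

variable {M : Type*} [TopologicalSpace M] {X S : Set M}

theorem GδSeparated.isGδ (h : GδSeparated X Xᶜ) : IsGδ X := by
  obtain ⟨H, hH, hXH, hdisj⟩ := h
  rwa [hXH.antisymm (disjoint_compl_right_iff_subset.1 hdisj)]

theorem GδSeparated.biUnion {ι : Type*} {I : Set ι} (hI : I.Countable) {S : ι → Set M}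
    (h : ∀ i ∈ I, GδSeparated X (S i)) : GδSeparated X (⋃ i ∈ I, S i) := by
  choose! H hH hXH hdisj using h
  exact ⟨⋂ i ∈ I, H i, .biInter hI hH, subset_iInter₂ hXH,
    disjoint_iUnion₂_right.2 fun i hi => (hdisj i hi).mono_left (biInter_subset_of_mem hi)⟩

theorem GδSeparated.union {T : Set M} (hS : GδSeparated X S) (hT : GδSeparated X T) :
    GδSeparated X (S ∪ T) := by
  obtain ⟨H, hH, hXH, hHS⟩ := hS
  obtain ⟨K, hK, hXK, hKT⟩ := hT
  exact ⟨H ∩ K, hH.inter hK, subset_inter hXH hXK,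
    disjoint_union_right.2 ⟨hHS.mono_left inter_subset_left, hKT.mono_left inter_subset_right⟩⟩

theorem GδSeparated.mono {T : Set M} (hS : GδSeparated X S) (hTS : T ⊆ S) : GδSeparated X T := by
  obtain ⟨H, hH, hXH, hHS⟩ := hS
  exact ⟨H, hH, hXH, hHS.mono_right hTS⟩

theorem GδSeparated.of_disjoint_closure (h : Disjoint X (closure S)) : GδSeparated X S :=
  ⟨(closure S)ᶜ, isClosed_closure.isOpen_compl.isGδ, h.subset_compl_right,
    disjoint_compl_left.mono_right subset_closure⟩

theorem exists_countable_subset_forall_isGδ_inter_range_nonempty {P : Type*} [TopologicalSpace P]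
    [BaireSpace P] [SecondCountableTopology P] [Nonempty P] {f : P → M} (hf : Continuous f)
    (hX : ∀ U : Set P, IsOpen U → U.Nonempty → (closure (f '' U) ∩ X).Nonempty) :
    ∃ E ⊆ X, E.Countable ∧ ∀ H, IsGδ H → E ⊆ H → (H ∩ range f).Nonempty := by
  have hbasis := isBasis_countableBasis P
  have hmeets (U : Set P) (hU : U ∈ countableBasis P) : (closure (f '' U) ∩ X).Nonempty :=
    hX U (hbasis.isOpen hU) (nonempty_of_mem_countableBasis hU)
  have : Nonempty M := ‹Nonempty P›.map f
  choose! b hb hbX using hmeets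
  refine ⟨b '' countableBasis P, image_subset_iff.2 hbX, (countable_countableBasis P).image b, ?_⟩
  intro H hH hEH
  obtain ⟨V, hV, rfl⟩ := isGδ_iff_eq_iInter_nat.1 hH
  have hdense (n : ℕ) : Dense (f ⁻¹' V n) := by
    refine hbasis.dense_iff.2 fun U hU _ => ?_
    have hbV : b U ∈ V n := mem_iInter.1 (hEH (mem_image_of_mem b hU)) n
    obtain ⟨_, hxV, x, hxU, rfl⟩ := mem_closure_iff.1 (hb U hU) (V n) (hV n) hbV
    exact ⟨x, hxU, hxV⟩
  obtain ⟨x, hx⟩ := (dense_iInter_of_isOpen (fun n => (hV n).preimage hf) hdense).nonempty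
  exact ⟨f x, mem_iInter.2 fun n => mem_iInter.1 hx n, mem_range_self x⟩

/-- A Hurewicz type criterion: remove from the Baire space parametrizing `Xᶜ` every basic open set
whose image is `Gδ`-separated from `X`. If anything is left, the Baire category theorem there
produces a countable subset of `X` violating `h`. -/
theorem isGδ_of_forall_countable_subset (hX : AnalyticSet Xᶜ)
    (h : ∀ E ⊆ X, E.Countable → ∃ H, IsGδ H ∧ E ⊆ H ∧ H ⊆ X) : IsGδ X := by
  rw [AnalyticSet] at hX
  obtain hX | ⟨f, hf, hfX⟩ := hX
  · rw [compl_empty_iff.1 hX]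
    exact .univ
  let B := {U ∈ countableBasis (ℕ → ℕ) | GδSeparated X (f '' U)}
  let W := ⋃₀ B
  have hWopen : IsOpen W := isOpen_sUnion fun U hU => isOpen_of_mem_countableBasis hU.1
  have hW : GδSeparated X (f '' W) := by
    rw [image_sUnion, sUnion_image]
    exact .biUnion ((countable_countableBasis _).mono (sep_subset _ _)) fun U hU => hU.2
  obtain hWuniv | hWne := eq_or_ne W univ
  · rw [hWuniv, image_univ, hfX] at hW
    exact hW.isGδ
  have : PolishSpace (Wᶜ : Set (ℕ → ℕ)) := hWopen.isClosed_compl.polishSpace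
  have : Nonempty (Wᶜ : Set (ℕ → ℕ)) := (nonempty_compl.2 hWne).to_subtype
  let g (x : (Wᶜ : Set (ℕ → ℕ))) : M := f x
  have hmeets (U : Set (Wᶜ : Set (ℕ → ℕ))) (hU : IsOpen U) (hne : U.Nonempty) :
      (closure (g '' U) ∩ X).Nonempty := by
    obtain ⟨U, hUopen, rfl⟩ := isOpen_induced_iff.1 hU
    obtain ⟨x, hx⟩ := hne
    obtain ⟨T, hT, hxT, hTU⟩ :=
      (isBasis_countableBasis (ℕ → ℕ)).exists_subset_of_mem_open hx hUopen
    by_contra hdisj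
    rw [← not_disjoint_iff_nonempty_inter, not_not] at hdisj
    refine x.2 (mem_sUnion.2 ⟨T, ⟨hT, ?_⟩, hxT⟩)
    refine (hW.union (.of_disjoint_closure hdisj.symm)).mono ?_
    rintro _ ⟨y, hy, rfl⟩
    by_cases hyW : y ∈ W
    · exact Or.inl (mem_image_of_mem f hyW)
    · exact Or.inr ⟨⟨y, hyW⟩, hTU hy, rfl⟩
  obtain ⟨E, hEX, hE, hEmeets⟩ := exists_countable_subset_forall_isGδ_inter_range_nonempty
    (hf.comp continuous_subtype_val) hmeets
  obtain ⟨H, hH, hEH, hHX⟩ := h E hEX hE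
  obtain ⟨_, hxH, x, rfl⟩ := hEmeets H hH hEH
  exact absurd (hHX hxH) (hfX ▸ mem_range_self (x : ℕ → ℕ) : f x ∈ Xᶜ)

end Separation

section Pi

variable {ι : Type*} [Infinite ι] {π : ι → Type*} [∀ i, TopologicalSpace (π i)]

open scoped Classical in
theorem exists_forall_update_mem_of_isOpen {A : Set (∀ i, π i)} (hA : IsOpen A) {a : ∀ i, π i}
    (ha : a ∈ A) : ∃ i, ∀ y, Function.update a i y ∈ A := by
  obtain ⟨I, u, hu, hsub⟩ := isOpen_pi_iff.1 hA a ha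
  obtain ⟨i, hi⟩ := Infinite.exists_notMem_finset I
  refine ⟨i, fun y => hsub fun j hj => ?_⟩
  rw [Function.update_of_ne (ne_of_mem_of_not_mem hj hi)]
  exact (hu j hj).2

instance perfectSpace_pi [∀ i, Nontrivial (π i)] : PerfectSpace (∀ i, π i) := by
  classical
  refine perfectSpace_iff_forall_not_isolated.2 fun x => mem_closure_iff_nhdsWithin_neBot.1 ?_
  refine mem_closure_iff.2 fun U hU hxU => ?_
  obtain ⟨i, hi⟩ := exists_forall_update_mem_of_isOpen hU hxU
  obtain ⟨y, hy⟩ := exists_ne (x i)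
  exact ⟨Function.update x i y, hi y, Function.update_ne_self_iff.2 hy⟩

theorem interior_eq_empty_of_isCompact_pi [∀ i, NoncompactSpace (π i)] {K : Set (∀ i, π i)}
    (hK : IsCompact K) : interior K = ∅ := by
  classical
  refine eq_empty_of_forall_notMem fun a ha => ?_
  obtain ⟨i, hi⟩ := exists_forall_update_mem_of_isOpen isOpen_interior ha
  have himage : Function.eval i '' K = univ := eq_univ_of_forall fun y =>
    ⟨Function.update a i y, interior_subset (hi y), Function.update_self i y a⟩
  exact noncompact_univ (π i) (himage ▸ hK.image (continuous_apply i))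

theorem isMeagre_univ_pi [Countable ι] {V : ∀ i, Set (π i)} (hV : ∀ i, IsOpen (V i))
    (hne : ∀ i, (V i).Nonempty) (hm : ∀ i, IsMeagre (V i)) :
    IsMeagre (univ : Set (∀ i, π i)) := by
  classical
  let W (i : ι) : Set (∀ i, π i) := Function.eval i ⁻¹' V i
  have hWmeagre : IsMeagre (⋃ i, W i) := isMeagre_iUnion fun i =>
    (hm i).preimage_of_isOpenMap (continuous_apply i) (isOpenMap_eval i)
  have hWdense : Dense (⋃ i, W i) := dense_iff_inter_open.2 fun U hU ⟨a, ha⟩ => by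
    obtain ⟨i, hi⟩ := exists_forall_update_mem_of_isOpen hU ha
    obtain ⟨v, hv⟩ := hne i
    exact ⟨Function.update a i v, hi v, mem_iUnion.2 ⟨i, by simpa [W] using hv⟩⟩
  have hWresidual : (⋃ i, W i) ∈ residual (∀ i, π i) :=
    residual_of_dense_open (isOpen_iUnion fun i => (hV i).preimage (continuous_apply i)) hWdense
  rw [IsMeagre, compl_univ]
  filter_upwards [hWresidual, hWmeagre] with z hz hz' using hz' hz

end Pi

theorem baireSpace_of_forall_isOpen_not_isMeagre {Y : Type*} [TopologicalSpace Y]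
    (h : ∀ V : Set Y, IsOpen V → V.Nonempty → ¬IsMeagre V) : BaireSpace Y := by
  refine ⟨fun f hopen hdense => ?_⟩
  have hresidual : (⋂ n, f n) ∈ residual Y :=
    countable_iInter_mem.2 fun n => residual_of_dense_open (hopen n) (hdense n)
  refine dense_iff_inter_open.2 fun V hV hne => ?_
  by_contra hempty
  refine h V hV hne ?_
  filter_upwards [hresidual] with x hx hxV using hempty ⟨x, hxV, hx⟩

theorem baireSpace_of_not_isMeagre_univ_pi {ι : Type*} [Countable ι] [Infinite ι] {Y : Type*}
    [TopologicalSpace Y] (h : ¬IsMeagre (univ : Set (ι → Y))) : BaireSpace Y :=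
  baireSpace_of_forall_isOpen_not_isMeagre fun _ hV hne hm =>
    h (isMeagre_univ_pi (fun _ => hV) (fun _ => hne) fun _ => hm)

theorem exists_countable_dense_isGδ {Z : Type*} [TopologicalSpace Z] [SecondCountableTopology Z]
    [T1Space Z] [Nonempty Z] (hm : IsMeagre (univ : Set Z)) :
    ∃ D : Set Z, D.Countable ∧ Dense D ∧ IsGδ D := by
  obtain ⟨S, hSopen, hSdense, hS, hSempty⟩ := mem_residual_iff.1 hm
  rw [compl_univ, subset_empty_iff] at hSempty
  have hSne : S.Nonempty := nonempty_iff_ne_empty.2 fun h => by simp [h] at hSempty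
  obtain ⟨g, rfl⟩ := hS.exists_eq_range hSne
  rw [forall_mem_range] at hSopen hSdense
  obtain ⟨B, hB⟩ := (countable_countableBasis Z).exists_eq_range
    (.of_sUnion_eq_univ (isBasis_countableBasis Z).sUnion_eq)
  have hdense (k : ℕ) : Dense (⋂₀ (g '' Iic k)) :=
    ((finite_Iic k).image g).dense_sInter (forall_mem_image.2 fun i _ => hSopen i)
      (forall_mem_image.2 fun i _ => hSdense i)
  have hBg (k : ℕ) : (B k ∩ ⋂₀ (g '' Iic k)).Nonempty := by
    have hBk : B k ∈ countableBasis Z := hB ▸ mem_range_self k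
    exact (hdense k).inter_open_nonempty _ (isOpen_of_mem_countableBasis hBk)
      (nonempty_of_mem_countableBasis hBk)
  choose d hdB hdg using hBg
  have range_eq : range d = ⋂ n, (g n ∪ d '' Iio n) := by
    refine Subset.antisymm (range_subset_iff.2 fun k => mem_iInter.2 fun n => ?_) fun z hz => ?_
    · rcases lt_or_ge k n with hkn | hnk
      · exact Or.inr (mem_image_of_mem d hkn)
      · exact Or.inl (hdg k (g n) (mem_image_of_mem g hnk))
    · obtain ⟨n, hn⟩ : ∃ n, z ∉ g n := by
        by_contra! hall
        exact hSempty.subset (mem_sInter.2 (forall_mem_range.2 hall))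
      exact image_subset_range d (Iio n) ((mem_iInter.1 hz n).resolve_left hn)
  refine ⟨range d, countable_range d, (isBasis_countableBasis Z).dense_iff.2 fun U hU _ => ?_, ?_⟩
  · obtain ⟨k, rfl⟩ : U ∈ range B := hB ▸ hU
    exact ⟨d k, hdB k, mem_range_self k⟩
  · rw [range_eq]
    exact .iInter fun n => (hSopen n).isGδ.union ((finite_Iio n).image d).isGδ

theorem not_isGδ_of_countable_of_dense {Z : Type*} [TopologicalSpace Z] [T1Space Z]
    [PerfectSpace Z] [BaireSpace Z] [Nonempty Z] {Q : Set Z} (hQ : Q.Countable) (hd : Dense Q) :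
    ¬IsGδ Q := by
  intro hG
  have hcompl : Dense Qᶜ := by
    rw [← biUnion_of_singleton Q, compl_iUnion₂]
    exact dense_biInter_of_isOpen (fun _ _ => isOpen_compl_singleton) hQ
      fun q _ => dense_compl_singleton q
  have hempty := (hd.inter_of_Gδ hG hQ.isGδ_compl hcompl).nonempty
  rw [inter_compl_self] at hempty
  exact not_nonempty_empty hempty

namespace IsCDH

variable {Z : Type*} [TopologicalSpace Z]

theorem isGδ_of_countable_of_dense (h : IsCDH Z) {D D' : Set Z} (hD : D.Countable) (hd : Dense D)
    (hG : IsGδ D) (hD' : D'.Countable) (hd' : Dense D') : IsGδ D' := by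
  obtain ⟨g, rfl⟩ := h D D' hD hd hD' hd'
  rw [g.image_eq_preimage_symm]
  exact hG.preimage g.symm.continuous

theorem not_isMeagre_univ [SecondCountableTopology Z] [T1Space Z] (h : IsCDH Z) {P : Type*}
    [TopologicalSpace P] [PerfectSpace P] [BaireSpace P] [SeparableSpace P] [Nonempty P]
    {c : P → Z} (hc : Continuous c) (hinj : Function.Injective c) :
    ¬IsMeagre (univ : Set Z) := by
  intro hm
  have : T1Space P := t1Space_of_injective_of_continuous hinj hc
  have : Nonempty Z := ‹Nonempty P›.map c
  obtain ⟨D, hD, hd, hG⟩ := exists_countable_dense_isGδ hm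
  obtain ⟨Q, hQ, hQd⟩ := exists_countable_dense P
  have hD' : (D ∪ c '' Q).Countable := hD.union (hQ.image c)
  have hG' := h.isGδ_of_countable_of_dense hD hd hG hD' (hd.mono subset_union_left)
  refine not_isGδ_of_countable_of_dense (hD'.preimage hinj) (hQd.mono fun x hx => ?_)
    (hG'.preimage hc)
  exact Or.inr (mem_image_of_mem c hx)

theorem not_isMeagre_univ_pi {ι Y : Type*} [Countable ι] [Infinite ι] [TopologicalSpace Y]
    [SecondCountableTopology Y] [T1Space Y] [Nontrivial Y] (h : IsCDH (ι → Y)) :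
    ¬IsMeagre (univ : Set (ι → Y)) := by
  obtain ⟨a, b, hab⟩ := exists_pair_ne Y
  let c : Bool → Y := (cond · a b)
  have hinj : Function.Injective c := by
    rintro (_ | _) (_ | _) hxy
    exacts [rfl, absurd hxy.symm hab, absurd hxy hab, rfl]
  exact h.not_isMeagre_univ (c := Pi.map fun _ : ι => c)
    (.piMap fun _ => continuous_of_discreteTopology) (.piMap fun _ => hinj)

theorem exists_polishSpace_superset (h : IsCDH Z) {G : Type*} [TopologicalSpace G] [PolishSpace G]
    {j : G → Z} (hj : IsEmbedding j) (hdense : DenseRange j) {E : Set Z} (hE : E.Countable) :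
    ∃ P : Set Z, PolishSpace P ∧ E ⊆ P := by
  obtain ⟨D, hD, hd⟩ := exists_countable_dense G
  have hjD : Dense (j '' D) := hdense.dense_image hj.continuous hd
  obtain ⟨g, hg⟩ := h (j '' D) (j '' D ∪ E) (hD.image j) hjD ((hD.image j).union hE)
    (hjD.mono subset_union_left)
  refine ⟨range (g ∘ j), ?_, fun x hx => ?_⟩
  · exact (g.isEmbedding.comp hj).toHomeomorph.symm.isClosedEmbedding.polishSpace
  · obtain ⟨_, ⟨z, _, rfl⟩, rfl⟩ : x ∈ g '' (j '' D) := hg ▸ Or.inr hx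
    exact mem_range_self z

end IsCDH

theorem tendsto_residual_of_isDenseInducing {X K : Type*} [TopologicalSpace X]
    [TopologicalSpace K] {i : X → K} (hi : IsDenseInducing i) :
    Tendsto i (residual X) (residual K) := by
  refine le_countableGenerate_iff_of_countableInterFilter.mpr ?_
  rintro t ⟨ht, htd⟩
  refine residual_of_dense_open (ht.preimage hi.continuous) ?_
  refine hi.isInducing.dense_iff.2 fun x => ?_
  rw [image_preimage_eq_inter_range]
  exact htd.inter_of_isOpen_left hi.dense ht (i x)

theorem exists_dense_polishSpace_of_baireMeasurableSet_range {X K : Type*} [TopologicalSpace X]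
    [BaireSpace X] [TopologicalSpace K] [PolishSpace K] {i : X → K} (hi : IsDenseEmbedding i)
    (hB : BaireMeasurableSet (range i)) : ∃ G : Set X, Dense G ∧ PolishSpace G := by
  obtain ⟨u, hu, hiu⟩ := hB.residualEq_isOpen
  have hiff : ∀ᶠ y in residual K, y ∈ range i ↔ y ∈ u := hiu.mem_iff
  have hpreimage : i ⁻¹' u ∈ residual X := by
    filter_upwards [(tendsto_residual_of_isDenseInducing hi.isDenseInducing).eventually hiff]
      with x hx using hx.1 (mem_range_self x)
  have hudense : Dense u := (hi.dense.dense_image hi.continuous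
    (dense_of_mem_residual hpreimage)).mono (image_preimage_subset i u)
  have hrange : range i ∈ residual K := by
    filter_upwards [hiff, residual_of_dense_open hu hudense] with y hy hyu using hy.2 hyu
  obtain ⟨t, hti, htG, htd⟩ := mem_residual.1 hrange
  have : PolishSpace t := polishSpace_of_isGδ htG
  have hsurj : Function.Surjective (t.restrictPreimage i) := by
    rintro ⟨y, hy⟩
    obtain ⟨x, rfl⟩ := hti hy
    exact ⟨⟨x, hy⟩, rfl⟩
  refine ⟨i ⁻¹' t, hi.isInducing.dense_iff.2 fun x => ?_, ?_⟩
  · rw [image_preimage_eq_of_subset hti]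
    exact htd (i x)
  · exact ((hi.isEmbedding.restrictPreimage t).toHomeomorphOfSurjective
      hsurj).isClosedEmbedding.polishSpace

theorem exists_dense_polishSpace_of_measurableSet {M : Type*} [TopologicalSpace M] [PolishSpace M]
    {X : Set M} [BaireSpace X] (hX : MeasurableSet[borel M] X) :
    ∃ G : Set X, Dense G ∧ PolishSpace G := by
  borelize M
  have : PolishSpace (closure X) := isClosed_closure.polishSpace
  have hdense : IsDenseEmbedding (inclusion (subset_closure (s := X))) :=
    ⟨⟨(IsEmbedding.inclusion subset_closure).isInducing,
      (denseRange_inclusion_iff subset_closure).2 Subset.rfl⟩,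
      inclusion_injective subset_closure⟩
  refine exists_dense_polishSpace_of_baireMeasurableSet_range hdense ?_
  rw [range_inclusion]
  exact (measurable_subtype_coe hX).baireMeasurableSet

theorem isClosedEmbedding_diagonal {ι X : Type*} [Nonempty ι] [TopologicalSpace X] [T2Space X] :
    IsClosedEmbedding (Function.const ι : X → ι → X) :=
  Function.LeftInverse.isClosedEmbedding (f := fun x : ι → X => x (Classical.arbitrary ι))
    (fun _ => rfl) (continuous_apply _) (continuous_pi fun _ => continuous_id)

theorem isGδ_of_isCDH_pi {M : Type*} [TopologicalSpace M] [PolishSpace M] {ι : Type*}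
    [Countable ι] [Infinite ι] {X : Set M} (hX : MeasurableSet[borel M] X) (h : IsCDH (ι → X)) :
    IsGδ X := by
  obtain hsub | hnt := X.subsingleton_or_nontrivial
  · exact hsub.finite.isGδ
  have : Nontrivial X := hnt.coe_sort
  have : BaireSpace X := baireSpace_of_not_isMeagre_univ_pi h.not_isMeagre_univ_pi
  obtain ⟨G, hG, _⟩ := exists_dense_polishSpace_of_measurableSet hX
  have hanalytic : AnalyticSet Xᶜ := by
    borelize M
    exact hX.compl.analyticSet
  refine isGδ_of_forall_countable_subset hanalytic fun E hEX hE => ?_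
  obtain ⟨P, _, hP⟩ := h.exists_polishSpace_superset (E := Function.const ι '' ((↑) ⁻¹' E))
    (.piMap fun _ => .subtypeVal (p := (· ∈ G))) (.piMap fun _ => hG.denseRange_val)
    ((hE.preimage Subtype.val_injective).image _)
  let A : Set X := Function.const ι ⁻¹' P
  have : PolishSpace A := (isClosedEmbedding_diagonal.restrictPreimage P).polishSpace
  have hA : IsGδ ((↑) '' A : Set M) := by
    rw [image_eq_range]
    exact isGδ_range_of_isEmbedding (.comp .subtypeVal .subtypeVal)
  exact ⟨_, hA, fun x hx => ⟨⟨x, hEX hx⟩, hP (mem_image_of_mem _ hx), rfl⟩,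
    Subtype.coe_image_subset X A⟩

/-- `B` partitions `A` into nonempty clopen sets: one splitting step of a clopen scheme. -/
structure IsClopenPartition {β Z : Type*} [TopologicalSpace Z] (A : Set Z) (B : β → Set Z) :
    Prop where
  isClopen : ∀ b, IsClopen (B b)
  nonempty : ∀ b, (B b).Nonempty
  pairwise_disjoint : Pairwise (Disjoint on B)
  iUnion_eq : ⋃ b, B b = A

/-- A scheme of nonempty clopen sets partitioning the whole space at every level. As in
`CantorScheme`, the sets are indexed by lists whose head is the last index chosen. -/
structure IsClopenScheme {β Z : Type*} [TopologicalSpace Z] (A : List β → Set Z) : Prop where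
  nil_eq : A [] = univ
  partition : ∀ s, IsClopenPartition (A s) fun b => A (b :: s)

/-- Along every branch, the sets of the scheme `A` shrink to a point that they all contain. -/
def BranchesConverge {β Z : Type*} [TopologicalSpace Z] (A : List β → Set Z) : Prop :=
  ∀ x : ℕ → β, ∃ z, (∀ n, z ∈ A (res x n)) ∧ ∀ U ∈ 𝓝 z, ∃ n, A (res x n) ⊆ U

/-- The scheme obtained by splitting a set `T` of level `n` into the sets `B n T b`. -/
def schemeOfStep {β Z : Type*} (B : ℕ → Set Z → β → Set Z) : List β → Set Z
  | [] => univ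
  | b :: s => B s.length (schemeOfStep B s) b

/-- The least index of a term of `e` in `A`; it is `0` if there is none. -/
noncomputable def firstIndex {Z : Type*} (e : ℕ → Z) (A : Set Z) : ℕ :=
  sInf {k | e k ∈ A}

/-- The sequences with all but finitely many terms equal to `o`: the countable dense set that all
others are mapped to. -/
def eventuallyEq {β : Type*} (o : β) : Set (ℕ → β) :=
  {x | ∀ᶠ n in atTop, x n = o}

theorem exists_isClopenScheme {β Z : Type*} [TopologicalSpace Z] [Nonempty Z]
    {Q : ℕ → Set Z → (β → Set Z) → Prop}
    (hQ : ∀ n A, IsClopen A → A.Nonempty → ∃ B : β → Set Z, IsClopenPartition A B ∧ Q n A B) :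
    ∃ A : List β → Set Z, IsClopenScheme A ∧ ∀ s, Q s.length (A s) fun b => A (b :: s) := by
  choose! B hB hQB using hQ
  have hclopen (s : List β) : IsClopen (schemeOfStep B s) ∧ (schemeOfStep B s).Nonempty := by
    induction s with
    | nil => exact ⟨isClopen_univ, univ_nonempty⟩
    | cons b s ih =>
      have hpart := hB s.length _ ih.1 ih.2
      exact ⟨hpart.isClopen b, hpart.nonempty b⟩
  exact ⟨schemeOfStep B, ⟨rfl, fun s => hB s.length _ (hclopen s).1 (hclopen s).2⟩,
    fun s => hQB s.length _ (hclopen s).1 (hclopen s).2⟩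

theorem firstIndex_mem {Z : Type*} [TopologicalSpace Z] {e : ℕ → Z} (he : DenseRange e)
    {A : Set Z} (hA : IsOpen A) (hne : A.Nonempty) : e (firstIndex e A) ∈ A :=
  Nat.sInf_mem (he.exists_mem_open hA hne)

theorem firstIndex_le {Z : Type*} {e : ℕ → Z} {A : Set Z} {k : ℕ} (hk : e k ∈ A) :
    firstIndex e A ≤ k :=
  Nat.sInf_le hk

namespace IsClopenScheme

variable {β Z : Type*} [TopologicalSpace Z] {A : List β → Set Z}

theorem cons_subset (hA : IsClopenScheme A) (b : β) (s : List β) : A (b :: s) ⊆ A s :=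
  (subset_iUnion (fun b => A (b :: s)) b).trans (hA.partition s).iUnion_eq.subset

theorem antitone (hA : IsClopenScheme A) (x : ℕ → β) : Antitone fun n => A (res x n) :=
  antitone_nat_of_succ_le fun n => hA.cons_subset (x n) (res x n)

theorem isClopen (hA : IsClopenScheme A) : ∀ s, IsClopen (A s)
  | [] => hA.nil_eq ▸ isClopen_univ
  | b :: s => (hA.partition s).isClopen b

theorem nonempty [Nonempty Z] (hA : IsClopenScheme A) : ∀ s, (A s).Nonempty
  | [] => hA.nil_eq ▸ univ_nonempty
  | b :: s => (hA.partition s).nonempty b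

theorem eq_of_mem_cons (hA : IsClopenScheme A) {b c : β} {s : List β} {z : Z}
    (hb : z ∈ A (b :: s)) (hc : z ∈ A (c :: s)) : b = c :=
  (hA.partition s).pairwise_disjoint.eq (not_disjoint_iff.2 ⟨z, hb, hc⟩)

theorem res_eq_of_mem (hA : IsClopenScheme A) {x y : ℕ → β} {z : Z} :
    ∀ {n}, z ∈ A (res x n) → z ∈ A (res y n) → res x n = res y n
  | 0, _, _ => rfl
  | n + 1, hx, hy => by
    have hres := hA.res_eq_of_mem (hA.cons_subset _ _ hx) (hA.cons_subset _ _ hy)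
    rw [res_succ] at hx hy ⊢
    rw [res_succ, ← hres]
    rw [← hres] at hy
    rw [hA.eq_of_mem_cons hx hy]

theorem eq_of_forall_mem (hA : IsClopenScheme A) {x y : ℕ → β} {z : Z}
    (hx : ∀ n, z ∈ A (res x n)) (hy : ∀ n, z ∈ A (res y n)) : x = y :=
  res_injective (funext fun n => hA.res_eq_of_mem (hx n) (hy n))

theorem exists_branch (hA : IsClopenScheme A) (z : Z) : ∃ x : ℕ → β, ∀ n, z ∈ A (res x n) := by
  have hcons (s : List β) (hz : z ∈ A s) : ∃ b, z ∈ A (b :: s) :=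
    mem_iUnion.1 ((hA.partition s).iUnion_eq.superset hz)
  have : Nonempty β := (hcons [] (hA.nil_eq ▸ mem_univ z)).nonempty
  choose! b hb using hcons
  let L (n : ℕ) : List β := (fun s => b s :: s)^[n] []
  have hL (n : ℕ) : L (n + 1) = b (L n) :: L n := Function.iterate_succ_apply' _ n []
  have hres (n : ℕ) : res (b ∘ L) n = L n := by
    induction n with
    | zero => rfl
    | succ n ih => rw [res_succ, ih, hL, Function.comp_apply]
  refine ⟨b ∘ L, fun n => ?_⟩
  rw [hres]
  induction n with
  | zero => exact hA.nil_eq ▸ mem_univ z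
  | succ n ih => exact hL n ▸ hb (L n) ih

theorem exists_homeomorph [T1Space Z] [TopologicalSpace β] [DiscreteTopology β]
    (hA : IsClopenScheme A) (hconv : BranchesConverge A) :
    ∃ h : Z ≃ₜ (ℕ → β), ∀ z n, z ∈ A (res (h z) n) := by
  choose f hf using hA.exists_branch
  choose g hg hgU using hconv
  have hfg (x : ℕ → β) : f (g x) = x := hA.eq_of_forall_mem (hf (g x)) (hg x)
  have hgf (z : Z) : g (f z) = z := by
    by_contra hne
    obtain ⟨n, hn⟩ := hgU (f z) {z}ᶜ (isOpen_compl_singleton.mem_nhds hne)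
    exact hn (hf z n) rfl
  have hfcont : Continuous f := by
    refine continuous_pi fun n => IsLocallyConstant.continuous ?_
    refine (IsLocallyConstant.iff_eventually_eq _).2 fun z => ?_
    filter_upwards [(hA.isClopen _).isOpen.mem_nhds (hf z (n + 1))] with w hw
    exact (List.cons.inj (hA.res_eq_of_mem (hf w (n + 1)) hw)).1
  have hgcont : Continuous g := continuous_iff_continuousAt.2 fun x U hU => by
    obtain ⟨n, hn⟩ := hgU x U hU
    rw [mem_map]
    filter_upwards [(isOpen_cylinder _ x n).mem_nhds (self_mem_cylinder x n)] with y hy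
    rw [cylinder_eq_res] at hy
    exact hn (hy ▸ hg y n)
  exact ⟨⟨⟨f, g, hgf, hfg⟩, hfcont, hgcont⟩, hf⟩

theorem firstIndex_cons_eq_iff (hA : IsClopenScheme A) {e : ℕ → Z} (he : DenseRange e) {o : β}
    (ho : ∀ s, e (firstIndex e (A s)) ∈ A (o :: s)) {b : β} {s : List β} :
    firstIndex e (A (b :: s)) = firstIndex e (A s) ↔ b = o := by
  have hmem : e (firstIndex e (A (b :: s))) ∈ A (b :: s) :=
    firstIndex_mem he ((hA.partition s).isClopen b).isOpen ((hA.partition s).nonempty b)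
  constructor
  · intro heq
    exact hA.eq_of_mem_cons (heq ▸ hmem) (ho s)
  · rintro rfl
    exact le_antisymm (firstIndex_le (ho s)) (firstIndex_le (hA.cons_subset b s hmem))

/-- Along the branch of `z`, the first index is nondecreasing and stays constant exactly at the
steps that choose `o`; it is bounded exactly when `z` is a term of `e`. -/
theorem image_range_eq_eventuallyEq (hA : IsClopenScheme A) {h : Z → ℕ → β}
    (hh : ∀ z n, z ∈ A (res (h z) n)) {e : ℕ → Z} (he : DenseRange e) {o : β}
    (ho : ∀ s, e (firstIndex e (A s)) ∈ A (o :: s)) : h '' range e = eventuallyEq o := by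
  have : Nonempty Z := ⟨e 0⟩
  let m (x : ℕ → β) (n : ℕ) : ℕ := firstIndex e (A (res x n))
  have hmem (x : ℕ → β) (n : ℕ) : e (m x n) ∈ A (res x n) :=
    firstIndex_mem he (hA.isClopen _).isOpen (hA.nonempty _)
  have hm (x : ℕ → β) (n : ℕ) : m x (n + 1) = m x n ↔ x n = o := hA.firstIndex_cons_eq_iff he ho
  refine Subset.antisymm ?_ fun x hx => ?_
  · rintro _ ⟨_, ⟨k, rfl⟩, rfl⟩
    have hmono : Monotone (m (h (e k))) := fun i j hij =>
      firstIndex_le (hA.antitone _ hij (hmem _ j))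
    have hbdd : BddAbove (range (m (h (e k)))) :=
      ⟨k, forall_mem_range.2 fun n => firstIndex_le (hh (e k) n)⟩
    have hconst := tendsto_atTop_ciSup hmono hbdd
    rw [nhds_discrete, tendsto_pure] at hconst
    filter_upwards [hconst, (tendsto_add_atTop_nat 1).eventually hconst] with n hn hn'
    exact (hm _ n).1 (hn'.trans hn.symm)
  · obtain ⟨N, hN⟩ := eventually_atTop.1 hx
    have hconst (n : ℕ) (hn : N ≤ n) : m x n = m x N := by
      induction n, hn using Nat.le_induction with
      | base => rfl
      | succ n hn ih => rw [(hm x n).2 (hN n hn), ih]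
    refine ⟨e (m x N), mem_range_self _, hA.eq_of_forall_mem (hh _) fun n => ?_⟩
    have hmax := hmem x (max n N)
    rw [hconst _ (le_max_right n N)] at hmax
    exact hA.antitone x (le_max_left n N) hmax

end IsClopenScheme

theorem exists_homeomorph_image_eq_eventuallyEq {β Z : Type*} [TopologicalSpace Z] [T1Space Z]
    [Nonempty Z] [TopologicalSpace β] [DiscreteTopology β] (o : β) {R : ℕ → Set Z → Prop}
    (hstep : ∀ n A, IsClopen A → ∀ a ∈ A, ∃ B : β → Set Z,
      IsClopenPartition A B ∧ a ∈ B o ∧ ∀ b, R n (B b))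
    (hconv : ∀ A : List β → Set Z, IsClopenScheme A → (∀ s b, R s.length (A (b :: s))) →
      BranchesConverge A)
    {D : Set Z} (hD : D.Countable) (hd : Dense D) :
    ∃ h : Z ≃ₜ (ℕ → β), h '' D = eventuallyEq o := by
  obtain ⟨e, rfl⟩ := hD.exists_eq_range hd.nonempty
  obtain ⟨A, hA, hQ⟩ := exists_isClopenScheme
    (Q := fun n A B => e (firstIndex e A) ∈ B o ∧ ∀ b : β, R n (B b))
    fun n A hA hne => hstep n A hA _ (firstIndex_mem hd hA.isOpen hne)
  obtain ⟨h, hh⟩ := hA.exists_homeomorph (hconv A hA fun s => (hQ s).2)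
  exact ⟨h, hA.image_range_eq_eventuallyEq hh hd fun s => (hQ s).1⟩

/-- Every countable dense subset of `Z` looks like `S ⊆ W`, up to a homeomorphism of the ambient
spaces. This determines `Z` up to homeomorphism and makes it CDH. -/
def IsCountableDenseModel (Z : Type*) [TopologicalSpace Z] {W : Type*} [TopologicalSpace W]
    (S : Set W) : Prop :=
  ∀ D : Set Z, D.Countable → Dense D → ∃ h : Z ≃ₜ W, h '' D = S

namespace IsCountableDenseModel

variable {Z W : Type*} [TopologicalSpace Z] [TopologicalSpace W] {S : Set W}

theorem isCDH (h : IsCountableDenseModel Z S) : IsCDH Z := by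
  intro D D' hD hd hD' hd'
  obtain ⟨g, hg⟩ := h D hD hd
  obtain ⟨g', hg'⟩ := h D' hD' hd'
  refine ⟨g.trans g'.symm, ?_⟩
  change g'.symm ∘ g '' D = D'
  rw [image_comp, hg, ← hg']
  exact g'.toEquiv.symm_image_image D'

theorem nonempty_homeomorph [SeparableSpace Z] (h : IsCountableDenseModel Z S) :
    Nonempty (Z ≃ₜ W) := by
  obtain ⟨D, hD, hd⟩ := exists_countable_dense Z
  exact (h D hD hd).nonempty

end IsCountableDenseModel

section Cantor

theorem branchesConverge_of_subset_or_subset_compl {β Z : Type*} [TopologicalSpace Z]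
    [CompactSpace Z] [Nonempty Z] {A : List β → Set Z} (hA : IsClopenScheme A) {C : ℕ → Set Z}
    (hC : IsTopologicalBasis (range C))
    (hAC : ∀ s b, A (b :: s) ⊆ C s.length ∨ A (b :: s) ⊆ (C s.length)ᶜ) :
    BranchesConverge A := by
  intro x
  obtain ⟨z, hz⟩ := IsCompact.nonempty_iInter_of_sequence_nonempty_isCompact_isClosed
    (fun n => A (res x n)) (fun n => hA.antitone x n.le_succ) (fun n => hA.nonempty _)
    (hA.isClopen _).isClosed.isCompact fun n => (hA.isClopen _).isClosed
  rw [mem_iInter] at hz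
  refine ⟨z, hz, fun U hU => ?_⟩
  obtain ⟨_, ⟨k, rfl⟩, hzC, hCU⟩ := hC.mem_nhds_iff.1 hU
  refine ⟨k + 1, Subset.trans ?_ hCU⟩
  have hk := hAC (res x k) (x k)
  rw [res_length] at hk
  exact hk.resolve_right fun h => h (hz (k + 1)) hzC

variable {Z : Type*} [TopologicalSpace Z] [T1Space Z]

theorem exists_isClopen_ssubset_of_subset_or_subset_compl [PerfectSpace Z]
    (hZ : IsTopologicalBasis {s : Set Z | IsClopen s}) {A C : Set Z} (hA : IsClopen A)
    (hC : IsClopen C) {a : Z} (ha : a ∈ A) :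
    ∃ W ⊂ A, IsClopen W ∧ a ∈ W ∧ (W ⊆ C ∨ W ⊆ Cᶜ) ∧ (A \ W ⊆ C ∨ A \ W ⊆ Cᶜ) := by
  wlog haC : a ∈ C generalizing C
  · obtain ⟨W, hWA, hW, haW, hWC, hAWC⟩ := this hC.compl haC
    rw [compl_compl] at hWC hAWC
    exact ⟨W, hWA, hW, haW, hWC.symm, hAWC.symm⟩
  by_cases hAC : A ⊆ C
  · obtain ⟨y, hyA, hya⟩ := (infinite_of_mem_nhds a (hA.isOpen.mem_nhds ha)).nontrivial.exists_ne a
    obtain ⟨W, hW, haW, hWA⟩ := hZ.exists_subset_of_mem_open (⟨ha, hya.symm⟩ : a ∈ A \ {y})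
      (hA.isOpen.sdiff isClosed_singleton)
    have hWA' : W ⊆ A := hWA.trans sdiff_subset
    exact ⟨W, ⟨hWA', fun h => (hWA (h hyA)).2 rfl⟩, hW, haW, .inl (hWA'.trans hAC),
      .inl (sdiff_subset.trans hAC)⟩
  · refine ⟨A ∩ C, inter_ssubset_left_iff.2 hAC, hA.inter hC, ⟨ha, haC⟩, .inl inter_subset_right,
      .inr ?_⟩
    rw [sdiff_self_inter]
    exact fun x hx => hx.2

theorem exists_isClopenPartition_bool [PerfectSpace Z]
    (hZ : IsTopologicalBasis {s : Set Z | IsClopen s}) {A C : Set Z} (hA : IsClopen A)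
    (hC : IsClopen C) {a : Z} (ha : a ∈ A) :
    ∃ B : Bool → Set Z, IsClopenPartition A B ∧ a ∈ B false ∧ ∀ b, B b ⊆ C ∨ B b ⊆ Cᶜ := by
  obtain ⟨W, hWA, hW, haW, hWC, hAWC⟩ :=
    exists_isClopen_ssubset_of_subset_or_subset_compl hZ hA hC ha
  refine ⟨(cond · (A \ W) W), ⟨?_, ?_, ?_, ?_⟩, haW, Bool.forall_bool.2 ⟨hWC, hAWC⟩⟩
  · exact Bool.forall_bool.2 ⟨hW, hA.diff hW⟩
  · exact Bool.forall_bool.2 ⟨⟨a, haW⟩, nonempty_of_ssubset hWA⟩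
  · rintro (_ | _) (_ | _) hbc
    exacts [absurd rfl hbc, disjoint_sdiff_right, disjoint_sdiff_left, absurd rfl hbc]
  · rw [← union_eq_iUnion, sdiff_union_of_subset hWA.subset]

theorem isCountableDenseModel_cantor [CompactSpace Z] [SecondCountableTopology Z]
    [PerfectSpace Z] [Nonempty Z] (hZ : IsTopologicalBasis {s : Set Z | IsClopen s}) :
    IsCountableDenseModel Z (eventuallyEq false) := by
  obtain ⟨𝒞, h𝒞, hcountable, hbasis⟩ := hZ.exists_countable
  obtain ⟨C, rfl⟩ := hcountable.exists_eq_range (.of_sUnion_eq_univ hbasis.sUnion_eq)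
  intro D hD hd
  exact exists_homeomorph_image_eq_eventuallyEq false
    (R := fun n T => T ⊆ C n ∨ T ⊆ (C n)ᶜ)
    (fun n A hA a ha => exists_isClopenPartition_bool hZ hA (h𝒞 (mem_range_self n)) ha)
    (fun A hA hAC => branchesConverge_of_subset_or_subset_compl hA hbasis hAC) hD hd

end Cantor

section Baire

theorem exists_disjoint_isClopen_iUnion_eq {Z : Type*} [TopologicalSpace Z]
    [SecondCountableTopology Z] (hZ : IsTopologicalBasis {s : Set Z | IsClopen s}) {A : Set Z}
    (hA : IsClopen A) (hne : A.Nonempty) {P : Set Z → Prop}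
    (hmono : ∀ ⦃S T⦄, S ⊆ T → P T → P S) (hlocal : ∀ x ∈ A, ∃ U ∈ 𝓝 x, P U) :
    ∃ X : ℕ → Set Z, (∀ n, IsClopen (X n)) ∧ (∀ n, P (X n)) ∧ Pairwise (Disjoint on X) ∧
      ⋃ n, X n = A := by
  have hclopen (x : Z) (hx : x ∈ A) : ∃ V, IsClopen V ∧ x ∈ V ∧ V ⊆ A ∧ P V := by
    obtain ⟨U, hU, hPU⟩ := hlocal x hx
    obtain ⟨V, hV, hxV, hVU⟩ := hZ.mem_nhds_iff.1 (inter_mem (hA.isOpen.mem_nhds hx) hU)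
    exact ⟨V, hV, hxV, hVU.trans inter_subset_left, hmono (hVU.trans inter_subset_right) hPU⟩
  choose! V hV hxV hVA hPV using hclopen
  obtain ⟨t, htA, ht, hAt⟩ := countable_cover_nhdsWithin (s := A) (f := V) fun x hx =>
    mem_nhdsWithin_of_mem_nhds ((hV x hx).isOpen.mem_nhds (hxV x hx))
  have htne : t.Nonempty := by
    obtain ⟨x, hx⟩ := hne
    obtain ⟨y, hy, _⟩ := mem_iUnion₂.1 (hAt hx)
    exact ⟨y, hy⟩
  obtain ⟨c, rfl⟩ := ht.exists_eq_range htne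
  have hcA (n : ℕ) : c n ∈ A := htA (mem_range_self n)
  refine ⟨disjointed (V ∘ c), fun n => ?_, fun n => ?_, disjoint_disjointed _, ?_⟩
  · exact disjointedRec (fun _ i hT => hT.diff (hV _ (hcA i))) (hV _ (hcA n))
  · exact hmono (disjointed_subset _ n) (hPV _ (hcA n))
  · rw [iUnion_disjointed]
    refine Subset.antisymm (iUnion_subset fun n => hVA _ (hcA n)) ?_
    rwa [biUnion_range] at hAt

theorem exists_equiv_nat_zero_eq {I : Set ℕ} (hI : I.Infinite) (i : I) :
    ∃ e : ℕ ≃ I, e 0 = i := by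
  have := hI.to_subtype
  obtain ⟨e⟩ : Nonempty (ℕ ≃ I) := nonempty_equiv_of_countable
  exact ⟨(Equiv.swap 0 (e.symm i)).trans e, by simp⟩

/-- Non-compactness gives an ultrafilter on `A` that converges to no point of `A`, and the pieces
are chosen outside this ultrafilter: then no finite union of them can be `A`. -/
theorem exists_isClopenPartition_nat {Z : Type*} [TopologicalSpace Z] [SecondCountableTopology Z]
    (hZ : IsTopologicalBasis {s : Set Z | IsClopen s}) {A : Set Z} (hA : IsClopen A)
    (hcompact : ¬IsCompact A) {P : Set Z → Prop} (hmono : ∀ ⦃S T⦄, S ⊆ T → P T → P S)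
    (hlocal : ∀ x ∈ A, ∃ U ∈ 𝓝 x, P U) {a : Z} (ha : a ∈ A) :
    ∃ B : ℕ → Set Z, IsClopenPartition A B ∧ a ∈ B 0 ∧ ∀ n, P (B n) := by
  obtain ⟨F, hFA, hF⟩ : ∃ F : Ultrafilter Z, ↑F ≤ 𝓟 A ∧ ∀ x ∈ A, ¬↑F ≤ 𝓝 x := by
    simpa only [isCompact_iff_ultrafilter_le_nhds, not_forall, not_exists, not_and,
      exists_prop] using hcompact
  obtain ⟨X, hX, hPX, hdisj, hXA⟩ := exists_disjoint_isClopen_iUnion_eq hZ hA ⟨a, ha⟩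
    (P := fun T => P T ∧ T ∉ F)
    (fun S T hST hT => ⟨hmono hST hT.1, fun hS => hT.2 (mem_of_superset hS hST)⟩) fun x hx => by
      obtain ⟨U, hU, hPU⟩ := hlocal x hx
      obtain ⟨V, hV, hVF⟩ := not_subset.1 (hF x hx)
      exact ⟨U ∩ V, inter_mem hU hV, hmono inter_subset_left hPU,
        fun hUV => hVF (mem_of_superset hUV inter_subset_right)⟩
  have hinf : {n | (X n).Nonempty}.Infinite := by
    intro hfin
    have hAF : ⋃ n ∈ {n | (X n).Nonempty}, X n ∈ F :=
      mem_of_superset (le_principal_iff.1 hFA) (hXA ▸ iUnion_subset fun n x hx =>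
        mem_biUnion (⟨x, hx⟩ : (X n).Nonempty) hx)
    obtain ⟨n, _, hn⟩ := (Ultrafilter.finite_biUnion_mem_iff hfin).1 hAF
    exact (hPX n).2 hn
  obtain ⟨n, hn⟩ := mem_iUnion.1 (hXA.superset ha)
  obtain ⟨e, he⟩ := exists_equiv_nat_zero_eq hinf ⟨n, a, hn⟩
  refine ⟨fun k => X (e k), ⟨fun k => hX _, fun k => (e k).2, fun j k hjk => ?_, ?_⟩, ?_,
    fun k => (hPX _).1⟩
  · exact hdisj (Subtype.val_injective.ne (e.injective.ne hjk))
  · rw [e.surjective.iUnion_comp fun i => X i, ← hXA]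
    refine Subset.antisymm (iUnion_subset fun i => subset_iUnion X i) ?_
    exact iUnion_subset fun i x hx => mem_iUnion.2 ⟨⟨i, x, hx⟩, hx⟩
  · simpa only [he] using hn

theorem branchesConverge_of_vanishingDiam {β Z : Type*} [MetricSpace Z] [CompleteSpace Z]
    [Nonempty Z] {A : List β → Set Z} (hA : IsClopenScheme A)
    (hdiam : CantorScheme.VanishingDiam A) : BranchesConverge A := by
  intro x
  have hanti : CantorScheme.ClosureAntitone A :=
    CantorScheme.Antitone.closureAntitone (fun s b => hA.cons_subset b s)
      fun s => (hA.isClopen s).isClosed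
  have hx : x ∈ (CantorScheme.inducedMap A).1 :=
    hanti.map_of_vanishingDiam hdiam hA.nonempty ▸ mem_univ x
  have hmem := CantorScheme.map_mem (A := A) ⟨x, hx⟩
  refine ⟨_, hmem, fun U hU => ?_⟩
  obtain ⟨ε, hε, hεU⟩ := EMetric.mem_nhds_iff.1 hU
  obtain ⟨n, hn⟩ := ((hdiam x).eventually_lt_const hε).exists
  exact ⟨n, fun y hy => hεU ((Metric.edist_le_ediam_of_mem hy (hmem n)).trans_lt hn)⟩

theorem vanishingDiam_of_ediam_cons_le {β Z : Type*} [PseudoMetricSpace Z] {A : List β → Set Z}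
    (h : ∀ s b, Metric.ediam (A (b :: s)) ≤ (s.length : ℝ≥0∞)⁻¹) :
    CantorScheme.VanishingDiam A := by
  intro x
  refine (tendsto_add_atTop_iff_nat 1).1 (tendsto_of_tendsto_of_tendsto_of_le_of_le
    tendsto_const_nhds ENNReal.tendsto_inv_nat_nhds_zero (fun _ => zero_le) fun n => ?_)
  have hn := h (res x n) (x n)
  rwa [res_length] at hn

theorem isCountableDenseModel_baire {Z : Type*} [TopologicalSpace Z] [PolishSpace Z] [Nonempty Z]
    (hZ : IsTopologicalBasis {s : Set Z | IsClopen s})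
    (hcompact : ∀ K : Set Z, IsCompact K → interior K = ∅) :
    IsCountableDenseModel Z (eventuallyEq 0) := by
  let _ := upgradeIsCompletelyMetrizable Z
  intro D hD hd
  refine exists_homeomorph_image_eq_eventuallyEq 0 (R := fun n T => Metric.ediam T ≤ (n : ℝ≥0∞)⁻¹)
    (fun n A hA a ha => ?_)
    (fun A hA hdiam => branchesConverge_of_vanishingDiam hA (vanishingDiam_of_ediam_cons_le hdiam))
    hD hd
  have hA' : ¬IsCompact A := fun h => by
    have hempty := hcompact A h
    rw [hA.isOpen.interior_eq] at hempty
    exact hempty.subset ha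
  refine exists_isClopenPartition_nat hZ hA hA'
    (fun S T hST hT => (Metric.ediam_mono hST).trans hT) (fun x _ => ?_) ha
  have hpos : 0 < (n : ℝ≥0∞)⁻¹ / 2 :=
    ENNReal.half_pos (ENNReal.inv_ne_zero.2 (ENNReal.natCast_ne_top n))
  refine ⟨Metric.eball x ((n : ℝ≥0∞)⁻¹ / 2), Metric.eball_mem_nhds x hpos, ?_⟩
  exact Metric.ediam_eball_le.trans_eq (ENNReal.mul_div_cancel two_ne_zero ENNReal.ofNat_ne_top)

end Baire

theorem isTopologicalBasis_isClopen_of_isInducing {X Y : Type*} [TopologicalSpace X]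
    [TopologicalSpace Y] {f : X → Y} (hf : IsInducing f)
    (hY : IsTopologicalBasis {s : Set Y | IsClopen s}) :
    IsTopologicalBasis {s : Set X | IsClopen s} :=
  isTopologicalBasis_of_isOpen_of_nhds (fun _ hs => hs.isOpen) fun x U hx hU => by
    obtain ⟨V, hV, rfl⟩ := hf.isOpen_iff.1 hU
    obtain ⟨W, hW, hxW, hWV⟩ := hY.exists_subset_of_mem_open hx hV
    exact ⟨f ⁻¹' W, hW.preimage hf.continuous, hxW, preimage_mono hWV⟩

theorem isTopologicalBasis_isClopen_pi {ι : Type*} {π : ι → Type*} [∀ i, TopologicalSpace (π i)]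
    (hπ : ∀ i, IsTopologicalBasis {s : Set (π i) | IsClopen s}) :
    IsTopologicalBasis {s : Set (∀ i, π i) | IsClopen s} :=
  isTopologicalBasis_of_isOpen_of_nhds (fun _ hs => hs.isOpen) fun x U hx hU => by
    obtain ⟨_, ⟨V, F, hV, rfl⟩, hxV, hVU⟩ :=
      (isTopologicalBasis_pi hπ).exists_subset_of_mem_open hx hU
    refine ⟨_, ?_, hxV, hVU⟩
    rw [mem_ofPred_eq, pi_def]
    exact isClopen_biInter_finset fun i hi => (hV i hi).preimage (continuous_apply i)

theorem isCountableDenseModel_pi {ι X : Type*} [Countable ι] [Infinite ι] [TopologicalSpace X]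
    [PolishSpace X] [Nontrivial X] (hX : IsTopologicalBasis {s : Set X | IsClopen s}) :
    IsCountableDenseModel (ι → X) (eventuallyEq false) ∨
      IsCountableDenseModel (ι → X) (eventuallyEq 0) := by
  have hpow := isTopologicalBasis_isClopen_pi fun _ : ι => hX
  by_cases hcompact : CompactSpace X
  · exact .inl (isCountableDenseModel_cantor hpow)
  · have := not_compactSpace_iff.1 hcompact
    exact .inr (isCountableDenseModel_baire hpow fun _ => interior_eq_empty_of_isCompact_pi)

theorem isCDH_of_subsingleton {Z : Type*} [TopologicalSpace Z] [Subsingleton Z] : IsCDH Z := by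
  intro D D' _ hd _ hd'
  have eq_univ {S : Set Z} (hS : Dense S) : S = univ := eq_univ_of_forall fun z => by
    obtain ⟨y, hy⟩ := closure_nonempty_iff.1 ⟨z, hS z⟩
    exact Subsingleton.elim y z ▸ hy
  exact ⟨.refl Z, by rw [eq_univ hd, eq_univ hd', image_univ, (Homeomorph.refl Z).range_coe]⟩

theorem isGδ_of_polishSpace_pi {M ι : Type*} [TopologicalSpace M] [MetrizableSpace M] [Nonempty ι]
    {X : Set M} [PolishSpace (ι → X)] : IsGδ X := by
  have : PolishSpace X := (isClosedEmbedding_diagonal (ι := ι)).polishSpace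
  exact isGδ_of_polishSpace

instance polishSpace_cantorSpace : PolishSpace (ℕ → Bool) where

theorem borel_pow_CDH_characterization_general {M ι : Type*} [TopologicalSpace M] [PolishSpace M]
    [Countable ι] [Infinite ι] (hM : IsTopologicalBasis {s : Set M | IsClopen s}) (X : Set M)
    (hB : MeasurableSet[borel M] X) :
    (IsCDH (ι → X) ↔ IsGδ X) ∧
    (IsGδ X ↔
      (Subsingleton (ι → X) ∨
       Nonempty ((ι → X) ≃ₜ (ℕ → Bool)) ∨
       Nonempty ((ι → X) ≃ₜ (ℕ → ℕ)))) := by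
  have hpolish : PolishSpace (ι → X) → IsGδ X := fun _ => isGδ_of_polishSpace_pi (ι := ι)
  have hX := isTopologicalBasis_isClopen_of_isInducing (.subtypeVal (t := X)) hM
  refine ⟨⟨isGδ_of_isCDH_pi hB, fun hG => ?_⟩, fun hG => ?_, ?_⟩
  · have := polishSpace_of_isGδ hG
    obtain _ | _ := subsingleton_or_nontrivial X
    · exact isCDH_of_subsingleton
    · exact (isCountableDenseModel_pi hX).elim (·.isCDH) (·.isCDH)
  · have := polishSpace_of_isGδ hG
    obtain _ | _ := subsingleton_or_nontrivial X
    · exact .inl inferInstance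
    · exact .inr ((isCountableDenseModel_pi hX).imp (·.nonempty_homeomorph)
        (·.nonempty_homeomorph))
  · rintro (_ | ⟨⟨h⟩⟩ | ⟨⟨h⟩⟩)
    · exact hpolish inferInstance
    · exact hpolish h.isClosedEmbedding.polishSpace
    · exact hpolish h.isClosedEmbedding.polishSpace

end

/-- For a Borel subset `X` of the Cantor space, the following are equivalent:
(1) `X^ℕ` is CDH; (2) `X` is `Gδ` in `2^ℕ`; (3) `X^ℕ` has at most one point, or is
homeomorphic to the Cantor space, or is homeomorphic to the Baire space. -/
theorem borel_pow_CDH_characterization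
    (X : Set (ℕ → Bool))
    (hB : MeasurableSet[borel (ℕ → Bool)] X) :
    (IsCDH (ℕ → ↥X) ↔ IsGδ X) ∧
    (IsGδ X ↔
      (Subsingleton (ℕ → ↥X) ∨
       Nonempty ((ℕ → ↥X) ≃ₜ (ℕ → Bool)) ∨
       Nonempty ((ℕ → ↥X) ≃ₜ (ℕ → ℕ)))) :=
  borel_pow_CDH_characterization_general isTopologicalBasis_isClopen X hB
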